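/- Let m ≥ 3, let B > 0, and let λ₁, …, λ_m be real numbers with λ_i ≤ B for all i and with sum S = λ₁ + ⋯ + λ_m. Suppose λ_i·(S − λ_i) < 0 for every i, and that at least two of the λ_i are negative. Then ∑_{i=1}^{m} |λ_i| < 3(m − 2)·B. -/

import Mathlib

open Finset

/-- Let `m ≥ 3`, `B > 0`, and `λ₁, …, λ_m` reals with `λᵢ ≤ B` for all `i` and sum `S`.
If `λᵢ·(S − λᵢ) < 0` for every `i` and at least two of the `λᵢ` are negative, then
`∑ |λᵢ| < 3(m − 2)·B`. -/
theorem sum_abs_lt_of_both_signs (m : ℕ) (hm : 3 ≤ m) (B : ℝ) (hB : 0 < B)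
    (lam : Fin m → ℝ) (hle : ∀ i, lam i ≤ B)
    (h : ∀ i, lam i * ((∑ j, lam j) - lam i) < 0)
    (hneg : 2 ≤ (Finset.univ.filter (fun i => lam i < 0)).card) :
    ∑ i, |lam i| < 3 * ((m : ℝ) - 2) * B := by
  obtain ⟨a, ha, b, hb, hab⟩ := Finset.one_lt_card.mp (show 1 < _ from hneg)
  have hla : lam a < 0 := (Finset.mem_filter.mp ha).2
  have hlb : lam b < 0 := (Finset.mem_filter.mp hb).2
  have hSa : lam a < ∑ j, lam j := by
    have := h a
    by_contra hc
    nlinarith [mul_nonneg_of_nonpos_of_nonpos hla.le (sub_nonpos.mpr (not_lt.mp hc))]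
  have hSb : lam b < ∑ j, lam j := by
    have := h b
    by_contra hc
    nlinarith [mul_nonneg_of_nonpos_of_nonpos hlb.le (sub_nonpos.mpr (not_lt.mp hc))]
  -- twice the sum of absolute values of the negative terms
  have hN : ∑ i ∈ ({a, b} : Finset (Fin m)), (|lam i| - lam i) ≤ ∑ i, (|lam i| - lam i) :=
    Finset.sum_le_sum_of_subset_of_nonneg (Finset.subset_univ _)
      (fun i _ _ => sub_nonneg.mpr (le_abs_self _))
  rw [Finset.sum_pair hab, Finset.sum_sub_distrib, abs_of_neg hla, abs_of_neg hlb] at hN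
  -- twice the sum of the positive terms
  have hP : ∑ i, (|lam i| + lam i) ≤ ∑ i, (2 * B - if lam i < 0 then 2 * B else 0) := by
    refine Finset.sum_le_sum fun i _ => ?_
    split_ifs with hi
    · rw [abs_of_neg hi]; linarith
    · rw [abs_of_nonneg (not_lt.mp hi)]; linarith [hle i]
  rw [Finset.sum_add_distrib, Finset.sum_sub_distrib, ← Finset.sum_filter] at hP
  simp only [Finset.sum_const, Finset.card_univ, Fintype.card_fin, nsmul_eq_mul] at hP
  have hk : (2 : ℝ) ≤ ((Finset.univ.filter (fun i => lam i < 0)).card : ℝ) := by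
    exact_mod_cast hneg
  nlinarith [mul_le_mul_of_nonneg_right hk hB.le]
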